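/- Let $R_1$ be a commutative local ring with unity having eight distinct units $u_1, \ldots, u_8$ and three distinct non-zero elements $a_1, a_2, a_3$ of its maximal ideal. Then $\Gamma'(R_1 \times \mathbb{Z}_2)$ contains $K_{8,4}$ as a subgraph, with parts $\{(u_i,0) : 1 \leq i \leq 8\}$ and $\{(0,1), (a_1,1), (a_2,1), (a_3,1)\}$. -/

import Mathlib

/-- Adjacency in the cozero-divisor graph `Γ'(R)`: both elements are vertices
(non-zero non-units) and neither lies in the principal ideal generated by the
other. -/
def cozeroAdj {R : Type*} [CommRing R] (x y : R) : Prop :=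
  (x ≠ 0 ∧ ¬ IsUnit x) ∧ (y ≠ 0 ∧ ¬ IsUnit y) ∧
    x ∉ Ideal.span {y} ∧ y ∉ Ideal.span {x}

section

variable {R S : Type*} [CommRing R] [CommRing S]

-- The vertex conditions come for free: `0` is a multiple of everything, a unit divides everything.
theorem cozeroAdj_iff_not_dvd {x y : R} :
    cozeroAdj x y ↔ ¬ y ∣ x ∧ ¬ x ∣ y := by
  simp only [cozeroAdj, Ideal.mem_span_singleton]
  refine ⟨fun h => h.2.2, fun ⟨hyx, hxy⟩ => ⟨⟨?_, ?_⟩, ⟨?_, ?_⟩, hyx, hxy⟩⟩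
  · rintro rfl
    exact hyx (dvd_zero y)
  · exact fun hx => hxy hx.dvd
  · rintro rfl
    exact hxy (dvd_zero x)
  · exact fun hy => hyx hy.dvd

theorem cozeroAdj.ne {x y : R} (h : cozeroAdj x y) : x ≠ y := by
  rintro rfl
  exact (cozeroAdj_iff_not_dvd.1 h).1 dvd_rfl

theorem cozeroAdj_prod_of_not_dvd {p q : R × S} (hfst : ¬ q.1 ∣ p.1) (hsnd : ¬ p.2 ∣ q.2) :
    cozeroAdj p q :=
  cozeroAdj_iff_not_dvd.2 ⟨fun h => hfst (prod_dvd_iff.1 h).1, fun h => hsnd (prod_dvd_iff.1 h).2⟩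

theorem stmt11_general [Nontrivial S] {ι κ : Type*}
    {u : ι → R} (hu : Function.Injective u) (huu : ∀ i, IsUnit (u i))
    {b : κ → R} (hb : Function.Injective b) (hbu : ∀ j, ¬ IsUnit (b j))
    {A : ι → R × S} {B : κ → R × S} (hA : A = fun i => (u i, 0)) (hB : B = fun j => (b j, 1)) :
    Function.Injective A ∧ Function.Injective B ∧ (∀ i j, A i ≠ B j) ∧
      ∀ i j, cozeroAdj (A i) (B j) := by
  subst hA hB
  have hadj (i : ι) (j : κ) : cozeroAdj ((u i, 0) : R × S) (b j, 1) :=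
    cozeroAdj_prod_of_not_dvd (fun h => hbu j (isUnit_of_dvd_unit h (huu i)))
      (fun h => one_ne_zero (zero_dvd_iff.1 h))
  exact ⟨(Prod.mk_left_injective 0).comp hu, (Prod.mk_left_injective 1).comp hb,
    fun i j => (hadj i j).ne, hadj⟩

end

/-- Let `R₁` be a commutative local ring with eight distinct units `u₁, …, u₈`
and three distinct non-zero elements `a₁, a₂, a₃` of its maximal ideal.  Then
`Γ'(R₁ × ℤ₂)` contains `K_{8,4}` as a subgraph with the indicated parts. -/
theorem stmt11 (R₁ : Type*) [CommRing R₁] [IsLocalRing R₁]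
    (u : Fin 8 → R₁) (hu : Function.Injective u) (huu : ∀ i, IsUnit (u i))
    (a : Fin 3 → R₁) (ha : Function.Injective a)
    (ham : ∀ i, a i ∈ IsLocalRing.maximalIdeal R₁) (ha0 : ∀ i, a i ≠ 0)
    (A : Fin 8 → R₁ × ZMod 2) (B : Fin 4 → R₁ × ZMod 2)
    (hA : A = fun i => (u i, 0))
    (hB : B = ![(0, 1), (a 0, 1), (a 1, 1), (a 2, 1)]) :
    Function.Injective A ∧ Function.Injective B ∧ (∀ i j, A i ≠ B j) ∧
      ∀ i j, cozeroAdj (A i) (B j) := by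
  have hb : Function.Injective (Fin.cons 0 a : Fin 4 → R₁) :=
    Fin.cons_injective_iff.2 ⟨fun ⟨i, hi⟩ => ha0 i hi, ha⟩
  have hB_cons : B = fun j => ((Fin.cons 0 a : Fin 4 → R₁) j, 1) := by
    rw [hB]
    ext j : 1
    fin_cases j <;> rfl
  exact stmt11_general hu huu hb (Fin.cases not_isUnit_zero ham) hA hB_cons
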